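/- Taking P to be the total order on the positive integers in the main theorem recovers the Jacobi–Trudi-type identity of Gessel–Krattenthaler/Postnikov: for a cylindric shape λ/μ/d, s_{λ/μ/d}(x) = Σ_{k ∈ Z^{λ_1}, Σk_i = 0} det[e_{k_i(λ_1+d) + λ'_i − μ'_j − i + j}(x)], where s_{λ/μ/d}(x) is the generating function of cylindric semistandard Young tableaux of shape λ/μ/d and e_n(x) are elementary symmetric functions (e_n = 0 for n < 0). -/

import Mathlib

open MvPolynomial
open scoped Classical

noncomputable section

/-- A poset is `(3+1)`-free: no induced subposet consisting of a 3-chain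
together with an element incomparable to all of it. -/
def ThreePlusOneFree (P : Type*) [PartialOrder P] : Prop :=
  ¬ ∃ a b c x : P, a < b ∧ b < c ∧
    ¬(x ≤ a ∨ a ≤ x) ∧ ¬(x ≤ b ∨ b ≤ x) ∧ ¬(x ≤ c ∨ c ≤ x)

/-- The `P`-elementary function `e_k^P(u)`, the sum of `u_{i_1} ⋯ u_{i_k}`
over strict chains `i_1 <_P ⋯ <_P i_k`. -/
def eP (P : Type*) [Fintype P] [PartialOrder P] (k : ℕ) : MvPolynomial P ℤ :=
  ∑ f ∈ Finset.univ.filter (fun f : Fin k → P => ∀ a b : Fin k, a < b → f a < f b),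
    ∏ i, X (f i)

/-- `e_k^P` for an integer index, vanishing for negative `k`. -/
def ePz (P : Type*) [Fintype P] [PartialOrder P] (k : ℤ) : MvPolynomial P ℤ :=
  if 0 ≤ k then eP P k.toNat else 0

/-- Conjugate partition: `conj f c` is the length of column `c` (0-indexed)
of the diagram of `f`. -/
def conj (f : ℕ → ℕ) (c : ℕ) : ℕ := Set.ncard {i | c < f i}

/-- `f : ℕ → ℕ` (0-indexed list of parts) is a partition. -/
def IsPartition (f : ℕ → ℕ) : Prop := (∀ i, f (i + 1) ≤ f i) ∧ ∃ N, ∀ i, N ≤ i → f i = 0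

/-- `λ/μ/d` is a cylindric shape. -/
def IsCylShape (lam mu : ℕ → ℕ) (d : ℕ) : Prop :=
  IsPartition lam ∧ IsPartition mu ∧ (∀ i, mu i ≤ lam i) ∧ 0 < lam 0 ∧
    conj lam 0 ≤ conj lam (lam 0 - 1) + d ∧
    conj mu 0 ≤ conj mu (lam 0 - 1) + d ∧ d ≤ conj lam 0

section Arrays
variable {P : Type*} [PartialOrder P]

/-- Column-strictness of the array `A` (a total function; only values on the cells
of the shape `col(α,β)`, over `l` columns, matter): entries strictly increase
down each column. This is the defining condition for a `P`-array. -/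
def ColStrict (A : ℕ → ℕ → P) (l : ℕ) (α β : ℕ → ℕ) : Prop :=
  ∀ c r r', c < l → β c ≤ r → r < r' → r' < α c → A r c < A r' c

/-- `col(α,β)` (with `β` a partition) is a skew partition shape. -/
def IsSkewShape (l : ℕ) (α β : ℕ → ℕ) : Prop :=
  (∀ c, c + 1 < l → α (c + 1) ≤ α c ∧ β (c + 1) ≤ β c) ∧ ∀ c, c < l → β c ≤ α c

/-- Rows of `A` are weakly increasing in `P`: no entry is `>_P` its right neighbour. -/
def RowWeak (A : ℕ → ℕ → P) (l : ℕ) (α β : ℕ → ℕ) : Prop :=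
  ∀ r c, c + 1 < l → β c ≤ r → r < α c → β (c + 1) ≤ r → r < α (c + 1) →
    ¬ A r (c + 1) < A r c

/-- `A` is a `P`-tableau of shape `col(α,β)`. -/
def IsPTableau (A : ℕ → ℕ → P) (l : ℕ) (α β : ℕ → ℕ) : Prop :=
  IsSkewShape l α β ∧ ColStrict A l α β ∧ RowWeak A l α β

/-- The glued array `A^d`: columns `0,…,l-1` of `A` shifted down by `d`, and a copy
of column `0` of `A` as the extra column `l`. -/
def glueArr (A : ℕ → ℕ → P) (l d : ℕ) : ℕ → ℕ → P :=
  fun r c => if c < l then A (r - d) c else A r 0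

/-- Column lengths of the glued shape. -/
def glueCol (f : ℕ → ℕ) (l d : ℕ) : ℕ → ℕ :=
  fun c => if c < l then f c + d else f 0

/-- `(r,j)` is an intersection point of columns `i < j` of `A`
(shape `col(α,β)`), with witness in column `i`. -/
def IsIntPoint (A : ℕ → ℕ → P) (α β : ℕ → ℕ) (i j r : ℕ) : Prop :=
  i < j ∧ β j ≤ r ∧ r < α j ∧
    ∃ w, w + j = r + 1 + i ∧ β i ≤ w ∧ (α i ≤ w ∨ A r j < A w i)

/-- Columns `i < j` of `A` intersect. -/
def Intersecting (A : ℕ → ℕ → P) (α β : ℕ → ℕ) (i j : ℕ) : Prop :=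
  ∃ r, IsIntPoint A α β i j r

/-- `(r,j)` is a `P`-minimal intersection point of the array `A` with columns `0,…,L`. -/
def PMinIP (A : ℕ → ℕ → P) (α β : ℕ → ℕ) (L j r : ℕ) : Prop :=
  j ≤ L ∧ (∃ i, IsIntPoint A α β i j r) ∧
    ∀ j' r' i', j' ≤ L → IsIntPoint A α β i' j' r' → ¬ A r' j' < A r j

/-- `(r,j)` is the rightmost `P`-minimal intersection point. -/
def RightmostPMinIP (A : ℕ → ℕ → P) (α β : ℕ → ℕ) (L j r : ℕ) : Prop :=
  PMinIP A α β L j r ∧ ∀ j' r', PMinIP A α β L j' r' → j' ≤ j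

/-- The cylindric swap `swap(A,i,j,d)` at the `P`-minimal intersection point `m` of
columns `i < j ≤ l` of `A^d` (the minimal intersection point is the lowest-row one,
since column `j` is a chain).  Everything is in the coordinates of `A`; the case
`j = l` is the wrap-around case, where entries move between column `i` and column `0`. -/
def swapArr (A : ℕ → ℕ → P) (l d i j : ℕ) (α β : ℕ → ℕ) : ℕ → ℕ → P :=
  let m := sInf {r | IsIntPoint (glueArr A l d) (glueCol α l d) (glueCol β l d) i j r}
  if j < l then
    fun r c =>
      if c = i ∧ m + 1 + i ≤ r + j + d then A (r + (j - i)) j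
      else if c = j ∧ m + 1 ≤ r + d then A (r - (j - i)) i
      else A r c
  else
    fun r c =>
      if c = i ∧ m + 1 + i ≤ r + j + d then A (r + (j - i) + d) 0
      else if c = 0 ∧ m + 1 ≤ r then A (r - (d + (j - i))) i
      else A r c

end Arrays

/-- A cylindric `P`-tableau of shape `λ/μ/d`, encoded column by column:
`T c p` is the entry of column `c` in the `p`-th cell from the top
(global row `conj μ c + p`).  The condition is that the glued filling `T^d`
is a `P`-tableau: the glued shape is a skew shape, columns strictly increase
in `P`, and rows (including the wrap-around adjacency between the last column
and the copy of column `0` shifted up by `d`) weakly increase in `P`. -/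
def IsCylTab {P : Type*} [PartialOrder P] (lam mu : ℕ → ℕ) (d : ℕ)
    (T : ∀ c : Fin (lam 0), Fin (conj lam c - conj mu c) → P) : Prop :=
  (∀ c, c + 1 < lam 0 → conj lam (c + 1) ≤ conj lam c ∧ conj mu (c + 1) ≤ conj mu c) ∧
  (∀ c, c < lam 0 → conj mu c ≤ conj lam c) ∧
  (0 < lam 0 → conj lam 0 ≤ conj lam (lam 0 - 1) + d ∧ conj mu 0 ≤ conj mu (lam 0 - 1) + d) ∧
  (∀ c p q, p < q → T c p < T c q) ∧
  (∀ (c : Fin (lam 0)) (hc : c.1 + 1 < lam 0)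
      (p : Fin (conj lam c.1 - conj mu c.1)) (q : Fin (conj lam (c.1 + 1) - conj mu (c.1 + 1))),
      conj mu c.1 + p.1 = conj mu (c.1 + 1) + q.1 → ¬ T ⟨c.1 + 1, hc⟩ q < T c p) ∧
  (∀ (h0 : 0 < lam 0) (p : Fin (conj lam (lam 0 - 1) - conj mu (lam 0 - 1)))
      (q : Fin (conj lam 0 - conj mu 0)),
      conj mu (lam 0 - 1) + p.1 + d = conj mu 0 + q.1 →
      ¬ T ⟨0, h0⟩ q < T ⟨lam 0 - 1, Nat.sub_lt h0 Nat.one_pos⟩ p)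

/-- The `u`-monomial weight `u^T` of a tableau. -/
def uT {P : Type*} (lam mu : ℕ → ℕ)
    (T : ∀ c : Fin (lam 0), Fin (conj lam c - conj mu c) → P) : MvPolynomial P ℤ :=
  ∏ c, ∏ p, X (T c p)

/-- Number of occurrences of the value `x` in the tableau `T`. -/
def tabCount {P : Type*} (lam mu : ℕ → ℕ)
    (T : ∀ c : Fin (lam 0), Fin (conj lam c - conj mu c) → P) (x : P) : ℕ :=
  ∑ c, (Finset.univ.filter (fun p => T c p = x)).card

/-- `T` is standard: it contains each element of `P` exactly once. -/
def IsStandardTab {P : Type*} (lam mu : ℕ → ℕ)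
    (T : ∀ c : Fin (lam 0), Fin (conj lam c - conj mu c) → P) : Prop :=
  ∀ x : P, tabCount lam mu T x = 1

/-- The chromatic symmetric polynomial of the incomparability graph `inc(P)`,
in the variables `x_0, …, x_{N-1}`. -/
def chromPoly (P : Type*) [Fintype P] [PartialOrder P] (N : ℕ) : MvPolynomial (Fin N) ℤ :=
  ∑ κ ∈ Finset.univ.filter
      (fun κ : P → Fin N => ∀ a b : P, a ≠ b → ¬(a ≤ b ∨ b ≤ a) → κ a ≠ κ b),
    ∏ v, X (κ v)

end

/-- Elementary symmetric polynomials in `N` variables with integer index,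
vanishing in negative degrees. -/
noncomputable def ezN (N : ℕ) (k : ℤ) : MvPolynomial (Fin N) ℤ :=
  if 0 ≤ k then esymm (Fin N) ℤ k.toNat else 0

/-!
Read the entries of a column-strict filling as times at which walkers on `ℤ` step up by one: the
walker of column `c` starts at `μ'_c - c`, ends at `λ'_c - c`, and moves at time `s` exactly when
`s` occurs in column `c`. The row conditions, wrap-around included, say that the walkers keep their
order and stay within a window of length `n = λ₁ + d`, i.e. that the walk stays in an alcove of the
affine symmetric group. Both the weighted count of such walks and the sum of determinants satisfy
the recurrence obtained by removing the last step, and both start from the indicator of the starting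
point. A step out of the alcove lands on a reflecting hyperplane `b i = b j + m n`, where the sum of
determinants vanishes because the reflection permutes its terms up to sign; so the two agree.
-/

namespace CylindricJacobiTrudi
open Finset

section ElementarySymmetric
variable {R : Type*} [CommSemiring R]

/-- The elementary symmetric function of a multiset, with integer index; it vanishes in negative
degrees. -/
noncomputable def esymmInt (s : Multiset R) (m : ℤ) : R :=
  if 0 ≤ m then s.esymm m.toNat else 0

lemma esymmInt_of_neg (s : Multiset R) {m : ℤ} (hm : m < 0) : esymmInt s m = 0 :=
  if_neg hm.not_ge

lemma esymmInt_natCast (s : Multiset R) (k : ℕ) : esymmInt s k = s.esymm k := by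
  simp [esymmInt]

lemma esymmInt_zero (m : ℤ) : esymmInt (0 : Multiset R) m = if m = 0 then 1 else 0 := by
  rcases lt_or_ge m 0 with hm | hm
  · rw [esymmInt_of_neg _ hm, if_neg hm.ne]
  · lift m to ℕ using hm
    cases m with
    | zero => simp [esymmInt, Multiset.esymm]
    | succ k =>
      rw [esymmInt_natCast, if_neg (by exact_mod_cast k.succ_ne_zero)]
      simp [Multiset.esymm, Multiset.powersetCard_zero_right]

lemma esymmInt_cons (y : R) (s : Multiset R) (m : ℤ) :
    esymmInt (y ::ₘ s) m = esymmInt s m + y * esymmInt s (m - 1) := by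
  rcases lt_or_ge m 0 with hm | hm
  · simp [esymmInt_of_neg, hm, show m - 1 < 0 by omega]
  · lift m to ℕ using hm
    cases m with
    | zero => simp [esymmInt, Multiset.esymm]
    | succ k =>
      rw [Nat.cast_succ, add_sub_cancel_right, ← Nat.cast_succ]
      simp only [esymmInt_natCast, Multiset.esymm, Multiset.powersetCard_cons, Multiset.map_add,
        Multiset.map_map, Multiset.sum_add, Function.comp_def, Multiset.prod_cons,
        Multiset.sum_map_mul_left]

lemma finite_support_esymmInt (s : Multiset R) : (Function.support (esymmInt s)).Finite := by
  refine (Set.finite_Icc 0 (s.card : ℤ)).subset fun m hm => ?_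
  have hm0 : 0 ≤ m := not_lt.1 fun h => hm (esymmInt_of_neg s h)
  lift m to ℕ using hm0
  refine ⟨Int.natCast_nonneg m, not_lt.1 fun h => hm ?_⟩
  rw [esymmInt_natCast, Multiset.esymm, Multiset.powersetCard_eq_empty _ (by exact_mod_cast h)]
  simp

end ElementarySymmetric

section Step
variable {ι : Type*} [DecidableEq ι]

/-- The displacement of the walkers in one time step, when those in `e` move up by one. -/
def step (e : Finset ι) (c : ι) : ℤ := if c ∈ e then 1 else 0

lemma step_nonneg (e : Finset ι) (c : ι) : 0 ≤ step e c := by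
  unfold step; split_ifs <;> simp

lemma step_le_one (e : Finset ι) (c : ι) : step e c ≤ 1 := by
  unfold step; split_ifs <;> simp

end Step

section Determinant
variable {R : Type*} [CommRing R] {ι : Type*} [Fintype ι] [DecidableEq ι]

/-- The Jacobi–Trudi determinant `det (e_{b i - a j})`, which counts with signs the walks from
`a` to `b`. -/
noncomputable def jacobiTrudiDet (s : Multiset R) (a b : ι → ℤ) : R :=
  Matrix.det (Matrix.of fun i j => esymmInt s (b i - a j))

variable {s : Multiset R} {a b : ι → ℤ}

lemma jacobiTrudiDet_comp_swap (s : Multiset R) (a b : ι → ℤ) {i j : ι} (hij : i ≠ j) :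
    jacobiTrudiDet s a (b ∘ Equiv.swap i j) = -jacobiTrudiDet s a b := by
  have h := Matrix.det_permute (Equiv.swap i j)
    (Matrix.of fun i j => esymmInt s (b i - a j))
  rw [Equiv.Perm.sign_swap hij] at h
  simp only [Units.val_neg, Units.val_one, Int.cast_neg, Int.cast_one, neg_mul, one_mul] at h
  exact h

lemma jacobiTrudiDet_eq_zero_of_apply_eq {i j : ι} (hij : i ≠ j) (h : b i = b j) :
    jacobiTrudiDet s a b = 0 :=
  Matrix.det_zero_of_row_eq hij <| by ext c; simp [h]

lemma exists_esymmInt_ne_zero_of_jacobiTrudiDet_ne_zero (h : jacobiTrudiDet s a b ≠ 0) (i : ι) :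
    ∃ j, esymmInt s (b i - a j) ≠ 0 := by
  by_contra! hrow
  exact h (Matrix.det_eq_zero_of_row_eq_zero i hrow)

lemma exists_perm_of_jacobiTrudiDet_zero_ne_zero
    (h : jacobiTrudiDet (0 : Multiset R) a b ≠ 0) : ∃ σ : Equiv.Perm ι, b = a ∘ σ := by
  rw [jacobiTrudiDet, Matrix.det_apply] at h
  obtain ⟨σ, -, hσ⟩ := exists_ne_zero_of_sum_ne_zero h
  refine ⟨σ.symm, (σ.eq_comp_symm _ _).2 <| funext fun i => ?_⟩
  by_contra hne
  refine hσ ?_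
  rw [prod_eq_zero (mem_univ i), smul_zero]
  exact (esymmInt_zero _).trans (if_neg (sub_ne_zero.2 hne))

lemma jacobiTrudiDet_zero_self (ha : Function.Injective a) :
    jacobiTrudiDet (0 : Multiset R) a a = 1 := by
  rw [jacobiTrudiDet, ← Matrix.det_one (n := ι)]
  congr 1
  ext i j
  simp [esymmInt_zero, sub_eq_zero, Matrix.one_apply, ha.eq_iff]

lemma jacobiTrudiDet_cons (y : R) (s : Multiset R) (a b : ι → ℤ) :
    jacobiTrudiDet (y ::ₘ s) a b =
      ∑ e : Finset ι, y ^ #e * jacobiTrudiDet s a (b - step e) := by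
  have hrow : jacobiTrudiDet (y ::ₘ s) a b = Matrix.detRowAlternating
      ((fun i j => y * esymmInt s (b i - a j - 1)) + fun i j => esymmInt s (b i - a j)) := by
    change Matrix.det _ = Matrix.det _
    congr 1
    ext i j
    simp [esymmInt_cons, add_comm]
  rw [hrow]
  refine (Matrix.detRowAlternating.toMultilinearMap.map_add_univ _ _).trans ?_
  refine sum_congr rfl fun e _ => ?_
  have hprod : y ^ #e = ∏ i, if i ∈ e then y else 1 := by
    rw [prod_ite_mem, univ_inter, prod_const]
  rw [hprod, jacobiTrudiDet, ← Matrix.det_mul_column]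
  change Matrix.det _ = _
  congr 1
  ext i j
  by_cases hi : i ∈ e <;> simp [step, hi, sub_right_comm]

end Determinant

section Reflection
variable {ι : Type*} [DecidableEq ι]

/-- The translation part of the affine reflection in the hyperplane `b i = b j + m n`: the
reflection maps `b + n k` to `b + n (reflectTranslation i j m k)` for `b` on that hyperplane. -/
def reflectTranslation (i j : ι) (m : ℤ) (k : ι → ℤ) : ι → ℤ :=
  k ∘ Equiv.swap i j + (Pi.single j m - Pi.single i m)

lemma reflectTranslation_involutive {i j : ι} (hij : i ≠ j) (m : ℤ) :
    Function.Involutive (reflectTranslation i j m) := by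
  intro k
  ext c
  rcases eq_or_ne c i with rfl | hi
  · simp [reflectTranslation, hij, hij.symm]
  rcases eq_or_ne c j with rfl | hj
  · simp [reflectTranslation, hij, hij.symm]
  · simp [reflectTranslation, hi, hj, Equiv.swap_apply_of_ne_of_ne]

lemma add_smul_reflectTranslation {n : ℤ} {b : ι → ℤ} {i j : ι} {m : ℤ} (hij : i ≠ j)
    (h : b i = b j + m * n) (k : ι → ℤ) :
    b + n • reflectTranslation i j m k = (b + n • k) ∘ Equiv.swap i j := by
  ext c
  rcases eq_or_ne c i with rfl | hi
  · simp [reflectTranslation, hij, h]; ring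
  rcases eq_or_ne c j with rfl | hj
  · simp [reflectTranslation, hij.symm, h]; ring
  · simp [reflectTranslation, hi, hj, Equiv.swap_apply_of_ne_of_ne]

lemma sum_reflectTranslation [Fintype ι] (i j : ι) (m : ℤ) (k : ι → ℤ) :
    ∑ c, reflectTranslation i j m k c = ∑ c, k c := by
  simp [reflectTranslation, sum_add_distrib, Equiv.sum_comp (Equiv.swap i j) k]

end Reflection

section AffineDeterminant

lemma finsum_eq_zero_of_involutive {κ M : Type*} [AddCommGroup M] {f : κ → M} {g : κ → κ}
    (hf : (Function.support f).Finite) (hg : Function.Involutive g)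
    (hneg : ∀ k, f (g k) = -f k) (hfix : ∀ k, g k = k → f k = 0) : ∑ᶠ k, f k = 0 := by
  rw [finsum_eq_sum f hf]
  refine sum_involution (fun k _ => g k) (fun k _ => by rw [hneg, add_neg_cancel])
    (fun k _ hk hgk => hk (hfix k hgk)) (fun k hk => ?_) fun k _ => hg k
  simpa [hneg] using hk

variable {R : Type*} [CommRing R] {ι : Type*} [Fintype ι] [DecidableEq ι]

/-- The sum of the Jacobi–Trudi determinants over all translates of the end point `b` by `n` times a
vector of coordinate sum zero, i.e. by the translation lattice of the affine symmetric group. -/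
noncomputable def affineDet (n : ℤ) (s : Multiset R) (a b : ι → ℤ) : R :=
  ∑ᶠ k : {k : ι → ℤ // ∑ i, k i = 0}, jacobiTrudiDet s a (b + n • k.1)

variable {n : ℤ}

lemma finite_support_jacobiTrudiDet_translate (hn : n ≠ 0) (s : Multiset R) (a b : ι → ℤ) :
    (Function.support fun k : {k : ι → ℤ // ∑ i, k i = 0} =>
      jacobiTrudiDet s a (b + n • k.1)).Finite := by
  have hrow (i : ι) : {m : ℤ | ∃ j, esymmInt s (b i + n * m - a j) ≠ 0}.Finite := by
    rw [Set.ofPred_exists]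
    refine Set.finite_iUnion fun j => (finite_support_esymmInt s).preimage
      (f := fun m => b i + n * m - a j) fun m _ m' _ h => ?_
    simpa [hn] using h
  refine ((Set.Finite.pi' hrow).preimage Subtype.val_injective.injOn).subset fun k hk i => ?_
  simpa using exists_esymmInt_ne_zero_of_jacobiTrudiDet_ne_zero hk i

lemma affineDet_cons (hn : n ≠ 0) (y : R) (s : Multiset R) (a b : ι → ℤ) :
    affineDet n (y ::ₘ s) a b = ∑ e : Finset ι, y ^ #e * affineDet n s a (b - step e) := by
  have hfin (e : Finset ι) := finite_support_jacobiTrudiDet_translate hn s a (b - step e)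
  simp only [affineDet, jacobiTrudiDet_cons, add_sub_right_comm]
  rw [finsum_sum_comm _ _ fun e _ => (hfin e).subset fun k hk => right_ne_zero_of_mul hk]
  exact sum_congr rfl fun e _ => (mul_finsum' _ _ (hfin e)).symm

lemma affineDet_eq_zero_of_mem_hyperplane (hn : n ≠ 0) (s : Multiset R) (a : ι → ℤ) {b : ι → ℤ}
    {i j : ι} {m : ℤ} (hij : i ≠ j) (h : b i = b j + m * n) : affineDet n s a b = 0 := by
  let reflect (k : {k : ι → ℤ // ∑ c, k c = 0}) : {k : ι → ℤ // ∑ c, k c = 0} :=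
    ⟨reflectTranslation i j m k.1, (sum_reflectTranslation i j m k.1).trans k.2⟩
  refine finsum_eq_zero_of_involutive (g := reflect)
    (finite_support_jacobiTrudiDet_translate hn s a b)
    (fun k => Subtype.ext (reflectTranslation_involutive hij m k.1)) (fun k => ?_) fun k hk => ?_
  · rw [add_smul_reflectTranslation hij h, jacobiTrudiDet_comp_swap s a _ hij]
  · have hfix := add_smul_reflectTranslation hij h k.1
    rw [show reflectTranslation i j m k.1 = k.1 from congrArg Subtype.val hk] at hfix
    exact jacobiTrudiDet_eq_zero_of_apply_eq hij (by simpa using congrFun hfix i)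

end AffineDeterminant

section Alcove
variable {ι : Type*} [LinearOrder ι] {n : ℤ} {a b : ι → ℤ}

/-- The integer points of the open fundamental alcove of the affine symmetric group, dilated by
`n`. -/
def alcove (ι : Type*) [LinearOrder ι] (n : ℤ) : Set (ι → ℤ) :=
  {p | StrictAnti p ∧ ∀ i j, p i - p j < n}

lemma exists_hyperplane_of_sub_step_notMem_alcove (hb : b ∈ alcove ι n) {e : Finset ι}
    (h : b - step e ∉ alcove ι n) :
    ∃ i j, i ≠ j ∧ ∃ m : ℤ, (b - step e) i = (b - step e) j + m * n := by
  obtain ⟨hanti, hwidth⟩ := hb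
  have hcases : ¬StrictAnti (b - step e) ∨ ¬∀ i j, (b - step e) i - (b - step e) j < n :=
    not_and_or.1 h
  rcases hcases with h | h
  · simp only [StrictAnti, not_forall, not_lt, Pi.sub_apply] at h
    obtain ⟨i, j, hij, hle⟩ := h
    refine ⟨i, j, hij.ne, 0, ?_⟩
    simp only [Pi.sub_apply]
    linarith [Int.add_one_le_iff.2 (hanti hij), step_nonneg e j, step_le_one e i]
  · simp only [not_forall, not_lt, Pi.sub_apply] at h
    obtain ⟨i, j, hle⟩ := h
    have hij : i ≠ j := by
      rintro rfl
      linarith [hwidth i i]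
    refine ⟨i, j, hij, 1, ?_⟩
    simp only [Pi.sub_apply]
    linarith [Int.add_one_le_iff.2 (hwidth i j), step_nonneg e i, step_le_one e j]

lemma eq_zero_of_sum_eq_zero_of_sub_lt_two {κ : Type*} [Fintype κ] {k : κ → ℤ}
    (hsum : ∑ i, k i = 0) (hk : ∀ i j, k i - k j < 2) : k = 0 := by
  have hnonpos (i : κ) : k i ≤ 0 := by
    by_contra! hi
    exact (sum_pos' (fun j _ => by linarith [hk i j]) ⟨i, mem_univ i, hi⟩).ne' hsum
  exact funext fun i => (sum_eq_zero_iff_of_nonpos fun i _ => hnonpos i).1 hsum i (mem_univ i)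

variable [Fintype ι]

/-- The alcove is a fundamental domain. -/
lemma eq_of_add_smul_eq_comp_perm (ha : a ∈ alcove ι n) (hb : b ∈ alcove ι n) {k : ι → ℤ}
    (hk : ∑ i, k i = 0) {σ : Equiv.Perm ι} (h : b + n • k = a ∘ σ) : k = 0 ∧ b = a := by
  have hk0 : k = 0 := by
    refine eq_zero_of_sum_eq_zero_of_sub_lt_two hk fun i j => ?_
    have hi : b i + n * k i = a (σ i) := by simpa using congrFun h i
    have hj : b j + n * k j = a (σ j) := by simpa using congrFun h j
    have hlt : n * (k i - k j) < n * 2 := by linarith [ha.2 (σ i) (σ j), hb.2 j i]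
    have hn : 0 < n := by simpa using ha.2 i i
    exact lt_of_mul_lt_mul_left hlt hn.le
  refine ⟨hk0, (hb.1.range_inj ha.1).1 ?_⟩
  rw [hk0, smul_zero, add_zero] at h
  rw [h, σ.surjective.range_comp]

lemma affineDet_zero {R : Type*} [CommRing R] (ha : a ∈ alcove ι n) (hb : b ∈ alcove ι n) :
    affineDet n (0 : Multiset R) a b = if b = a then 1 else 0 := by
  have heq (k : {k : ι → ℤ // ∑ i, k i = 0})
      (hne : jacobiTrudiDet (0 : Multiset R) a (b + n • k.1) ≠ 0) : k.1 = 0 ∧ b = a :=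
    have ⟨_, hσ⟩ := exists_perm_of_jacobiTrudiDet_zero_ne_zero hne
    eq_of_add_smul_eq_comp_perm ha hb k.2 hσ
  split_ifs with hba
  · rw [affineDet, finsum_eq_single _ ⟨0, by simp⟩]
    · simp [hba, jacobiTrudiDet_zero_self ha.1.injective]
    · intro k hk
      by_contra hne
      exact hk (Subtype.ext (heq k hne).1)
  · refine finsum_eq_zero_of_forall_eq_zero fun k => ?_
    by_contra hne
    exact hba (heq k hne).2

end Alcove

section Walk
variable {ι : Type*} [DecidableEq ι] {N : ℕ}

/-- The positions at time `t` of walkers that start at `a`, those in `ε s` moving up by one between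
the times `s` and `s + 1`. -/
def walk (a : ι → ℤ) (ε : Fin N → Finset ι) (t : Fin (N + 1)) : ι → ℤ :=
  a + ∑ s with s.castSucc < t, step (ε s)

lemma walk_snoc_castSucc (a : ι → ℤ) (ε : Fin N → Finset ι) (e : Finset ι) (t : Fin (N + 1)) :
    walk a (Fin.snoc ε e : Fin (N + 1) → Finset ι) t.castSucc = walk a ε t := by
  simp [walk, sum_filter, Fin.sum_univ_castSucc, (Fin.le_last t).not_gt]

lemma walk_snoc_last (a : ι → ℤ) (ε : Fin N → Finset ι) (e : Finset ι) :
    walk a (Fin.snoc ε e : Fin (N + 1) → Finset ι) (Fin.last (N + 1)) =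
      walk a ε (Fin.last N) + step e := by
  simp [walk, Fin.sum_univ_castSucc, Fin.castSucc_lt_last, add_assoc]

variable {R : Type*} [CommSemiring R] [Fintype ι] {A : Set (ι → ℤ)} {a b : ι → ℤ}

/-- The generating function of the walks from `a` to `b` that stay in `A`, a walker moving at time
`s` having weight `x s`. -/
noncomputable def walkSum (A : Set (ι → ℤ)) (x : Fin N → R) (a b : ι → ℤ) : R :=
  ∑ ε : Fin N → Finset ι with (∀ t, walk a ε t ∈ A) ∧ walk a ε (Fin.last N) = b,
    ∏ s, x s ^ #(ε s)

lemma walkSum_eq_zero_of_notMem (x : Fin N → R) (a : ι → ℤ) (hb : b ∉ A) :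
    walkSum A x a b = 0 := by
  rw [walkSum, filter_false_of_mem, sum_empty]
  rintro ε - ⟨hA, rfl⟩
  exact hb (hA _)

lemma walkSum_zero (x : Fin 0 → R) (ha : a ∈ A) :
    walkSum A x a b = if b = a then 1 else 0 := by
  rw [walkSum, sum_filter, Fintype.sum_unique]
  simp [walk, ha, eq_comm]

lemma walkSum_succ (x : Fin (N + 1) → R) (a : ι → ℤ) (hb : b ∈ A) :
    walkSum A x a b = ∑ e : Finset ι,
      x (Fin.last N) ^ #e * walkSum A (x ∘ Fin.castSucc) a (b - step e) := by
  simp only [walkSum, sum_filter]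
  rw [← (Fin.snocEquiv fun _ : Fin (N + 1) => Finset ι).sum_comp, Fintype.sum_prod_type]
  refine sum_congr rfl fun e _ => ?_
  rw [mul_sum]
  refine sum_congr rfl fun ε _ => ?_
  have hwalk : ((∀ t, walk a (Fin.snoc ε e : Fin (N + 1) → Finset ι) t ∈ A) ∧
      walk a (Fin.snoc ε e : Fin (N + 1) → Finset ι) (Fin.last (N + 1)) = b) ↔
      (∀ t, walk a ε t ∈ A) ∧ walk a ε (Fin.last N) = b - step e := by
    rw [Fin.forall_fin_succ', walk_snoc_last, eq_sub_iff_add_eq]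
    simp only [walk_snoc_castSucc]
    exact ⟨fun h => ⟨h.1.1, h.2⟩, fun h => ⟨⟨h.1, h.2 ▸ hb⟩, h.2⟩⟩
  rw [mul_ite, mul_zero]
  refine if_congr hwalk ?_ rfl
  simp [Fin.snocEquiv, Fin.prod_univ_castSucc, mul_comm]

end Walk

theorem walkSum_alcove {R ι : Type*} [CommRing R] [LinearOrder ι] [Fintype ι] {n : ℤ} (hn : n ≠ 0)
    {a : ι → ℤ} (ha : a ∈ alcove ι n) {N : ℕ} (x : Fin N → R) {b : ι → ℤ} (hb : b ∈ alcove ι n) :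
    walkSum (alcove ι n) x a b = affineDet n (univ.val.map x) a b := by
  induction N generalizing b with
  | zero =>
    rw [walkSum_zero x ha, univ_eq_empty, empty_val, Multiset.map_zero, affineDet_zero ha hb]
  | succ N ih =>
    have hcons : univ.val.map x = x (Fin.last N) ::ₘ univ.val.map (x ∘ Fin.castSucc) := by
      simp [Fin.univ_castSuccEmb, Function.comp_def]
    rw [walkSum_succ x a hb, hcons, affineDet_cons hn]
    refine sum_congr rfl fun e _ => congrArg _ ?_
    by_cases he : b - step e ∈ alcove ι n
    · exact ih _ he
    · obtain ⟨i, j, hij, m, hm⟩ := exists_hyperplane_of_sub_step_notMem_alcove hb he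
      rw [walkSum_eq_zero_of_notMem _ _ he, affineDet_eq_zero_of_mem_hyperplane hn _ _ hij hm]

section Column
variable {γ : Type*} [LinearOrder γ] {h h' : ℕ} {T : Fin h → γ} {T' : Fin h' → γ}

/-- The number of entries of the column `T` that are less than `t`. -/
def countLT (T : Fin h → γ) (t : γ) : ℕ := #{p | T p < t}

lemma countLT_le (T : Fin h → γ) (t : γ) : countLT T t ≤ h :=
  (card_le_univ _).trans_eq (Fintype.card_fin h)

lemma lt_countLT_iff (hT : StrictMono T) (p : Fin h) (t : γ) : p < countLT T t ↔ T p < t := by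
  constructor
  · intro hp
    by_contra! htp
    have hsub : ({q | T q < t} : Finset (Fin h)) ⊆ Iio p := fun q hq =>
      mem_Iio.2 (hT.lt_iff_lt.1 ((mem_filter.1 hq).2.trans_le htp))
    have hcard := card_le_card hsub
    rw [Fin.card_Iio] at hcard
    exact hp.not_ge hcard
  · intro hp
    have hsub : Iic p ⊆ ({q | T q < t} : Finset (Fin h)) := fun q hq =>
      mem_filter.2 ⟨mem_univ q, (hT.monotone (mem_Iic.1 hq)).trans_lt hp⟩
    have hcard := card_le_card hsub
    rw [Fin.card_Iic] at hcard
    exact Nat.succ_le_iff.1 hcard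

/-- Here `T` occupies the rows `α, …, α + h - 1`, and `T'`, to its right, the rows
`β, …, β + h' - 1`. -/
lemma forall_not_lt_iff_countLT_le (hT : StrictMono T) (hT' : StrictMono T') {α β : ℕ}
    (htop : β ≤ α) (hbot : β + h' ≤ α + h) :
    (∀ p q, α + p.1 = β + q.1 → ¬T' q < T p) ↔ ∀ t, β + countLT T' t ≤ α + countLT T t := by
  constructor
  · intro hrow t
    by_contra! hlt
    have hle := countLT_le T' t
    let p : Fin h := ⟨countLT T t, by omega⟩
    let q : Fin h' := ⟨α + countLT T t - β, by omega⟩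
    have hq : T' q < t := (lt_countLT_iff hT' q t).1 (by simp only [q]; omega)
    have hp : ¬T p < t := (lt_countLT_iff hT p t).not.1 (lt_irrefl _)
    exact hrow p q (by simp only [p, q]; omega) (hq.trans_le (not_lt.1 hp))
  · intro hcount p q hpq hlt
    have hq := (lt_countLT_iff hT' q (T p)).2 hlt
    have hp := (lt_countLT_iff hT p (T p)).not.2 (lt_irrefl _)
    have := hcount (T p)
    omega

end Column

section Filling
variable {ι : Type*} [Fintype ι] {N : ℕ} {h : ι → ℕ} {T : ∀ c, Fin (h c) → Fin N}

/-- The set of columns of the filling `T` in which `s` occurs: the walkers that move at time `s`. -/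
def columnsContaining (T : ∀ c, Fin (h c) → Fin N) (s : Fin N) : Finset ι := {c | ∃ p, T c p = s}

lemma mem_columnsContaining {c : ι} {s : Fin N} : c ∈ columnsContaining T s ↔ ∃ p, T c p = s := by
  simp [columnsContaining]

lemma columnsContaining_injOn :
    Set.InjOn columnsContaining {T : ∀ c, Fin (h c) → Fin N | ∀ c, StrictMono (T c)} := by
  intro T hT T' hT' heq
  funext c
  refine ((hT c).range_inj (hT' c)).1 (Set.ext fun s => ?_)
  rw [Set.mem_range, Set.mem_range, ← mem_columnsContaining, heq, mem_columnsContaining]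

lemma prod_filling_eq {R : Type*} [CommSemiring R] (hT : ∀ c, StrictMono (T c)) (x : Fin N → R) :
    ∏ c, ∏ p, x (T c p) = ∏ s, x s ^ #(columnsContaining T s) := by
  have hcol (c : ι) : ∏ p, x (T c p) = ∏ s, if c ∈ columnsContaining T s then x s else 1 := by
    rw [← prod_filter, ← prod_image (f := x) (hT c).injective.injOn]
    congr 1
    ext s
    simp [mem_columnsContaining]
  simp only [hcol]
  rw [prod_comm]
  simp only [prod_ite_mem, univ_inter, prod_const]

variable [DecidableEq ι]

lemma walk_columnsContaining (hT : ∀ c, StrictMono (T c)) (a : ι → ℤ) (t : Fin (N + 1)) (c : ι) :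
    walk a (columnsContaining T) t c = a c + countLT (fun p => (T c p).castSucc) t := by
  have himage : ({s | s.castSucc < t ∧ c ∈ columnsContaining T s} : Finset (Fin N)) =
      image (T c) {p | (T c p).castSucc < t} := by
    ext s
    simp only [mem_filter, mem_univ, true_and, mem_image, mem_columnsContaining]
    exact ⟨fun ⟨hs, p, hp⟩ => ⟨p, hp ▸ hs, hp⟩, fun ⟨p, hs, hp⟩ => ⟨hp ▸ hs, p, hp⟩⟩
  simp only [walk, Pi.add_apply, Finset.sum_apply, step]
  rw [sum_boole, filter_filter, himage, card_image_of_injective _ (hT c).injective, countLT]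

lemma forall_not_lt_iff_walk_le (hT : ∀ c, StrictMono (T c)) (a : ι → ℤ) {c c' : ι} {α β : ℕ}
    (htop : β ≤ α) (hbot : β + h c' ≤ α + h c) :
    (∀ p q, α + p.1 = β + q.1 → ¬T c' q < T c p) ↔
      ∀ t, β + (walk a (columnsContaining T) t c' - a c') ≤
        α + (walk a (columnsContaining T) t c - a c) := by
  have hcast (c : ι) : StrictMono fun p => (T c p).castSucc := Fin.strictMono_castSucc.comp (hT c)
  refine (forall_not_lt_iff_countLT_le (hcast c) (hcast c') htop hbot).trans
    (forall_congr' fun t => ?_)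
  rw [walk_columnsContaining hT, walk_columnsContaining hT]
  omega

lemma walk_columnsContaining_last (hT : ∀ c, StrictMono (T c)) (a : ι → ℤ) :
    walk a (columnsContaining T) (Fin.last N) = fun c => a c + h c := by
  ext c
  simp [walk_columnsContaining hT, countLT, Fin.castSucc_lt_last]

lemma exists_columnsContaining_eq {a : ι → ℤ} {ε : Fin N → Finset ι}
    (hε : walk a ε (Fin.last N) = fun c => a c + h c) :
    ∃ T : ∀ c, Fin (h c) → Fin N, (∀ c, StrictMono (T c)) ∧ columnsContaining T = ε := by
  have hcard (c : ι) : #{s | c ∈ ε s} = h c := by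
    have hc := congrFun hε c
    simpa [walk, Fin.castSucc_lt_last, step] using hc
  refine ⟨fun c => orderEmbOfFin _ (hcard c), fun c => OrderEmbedding.strictMono _, ?_⟩
  ext s c
  rw [mem_columnsContaining, ← Set.mem_range, range_orderEmbOfFin]
  simp

theorem sum_fillings_eq_walkSum {R : Type*} [CommSemiring R] (A : Set (ι → ℤ)) (x : Fin N → R)
    (a : ι → ℤ) :
    ∑ T : ∀ c, Fin (h c) → Fin N with
        (∀ c, StrictMono (T c)) ∧ ∀ t, walk a (columnsContaining T) t ∈ A,
      ∏ c, ∏ p, x (T c p) = walkSum A x a fun c => a c + h c := by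
  refine sum_nbij columnsContaining (fun T hT => ?_) (fun T hT T' hT' => ?_) (fun ε hε => ?_)
    fun T hT => ?_
  · have ⟨hmono, hA⟩ := (mem_filter.1 hT).2
    simpa using ⟨hA, walk_columnsContaining_last hmono a⟩
  · exact columnsContaining_injOn (mem_filter.1 hT).2.1 (mem_filter.1 hT').2.1
  · have ⟨hA, hend⟩ := (mem_filter.1 hε).2
    obtain ⟨T, hmono, rfl⟩ := exists_columnsContaining_eq hend
    exact ⟨T, by simpa using ⟨hmono, hA⟩, rfl⟩
  · exact prod_filling_eq (mem_filter.1 hT).2.1 x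

end Filling

section Shape

lemma mem_alcove_fin_iff {L : ℕ} (hL : 0 < L) {n : ℤ} {p : Fin L → ℤ} :
    p ∈ alcove (Fin L) n ↔ (∀ (c : Fin L) (hc : c.1 + 1 < L), p ⟨c.1 + 1, hc⟩ < p c) ∧
      p ⟨0, hL⟩ - p ⟨L - 1, Nat.sub_lt hL Nat.one_pos⟩ < n := by
  obtain ⟨m, rfl⟩ := Nat.exists_eq_succ_of_ne_zero hL.ne'
  refine ⟨fun hp => ⟨fun c hc => hp.1 (Fin.lt_def.2 (Nat.lt_succ_self _)), hp.2 _ _⟩, ?_⟩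
  rintro ⟨hsucc, hwidth⟩
  have hanti : StrictAnti p := Fin.strictAnti_iff_succ_lt.2 fun c =>
    hsucc c.castSucc (Nat.succ_lt_succ c.2)
  refine ⟨hanti, fun i j => ?_⟩
  have hi : p i ≤ p 0 := hanti.antitone (Fin.zero_le i)
  have hj : p (Fin.last m) ≤ p j := hanti.antitone (Fin.le_last j)
  exact (sub_le_sub hi hj).trans_lt hwidth

lemma conj_le_conj {f g : ℕ → ℕ} (hg : IsPartition g) {c c' : ℕ}
    (h : ∀ i, c < f i → c' < g i) : conj f c ≤ conj g c' := by
  obtain ⟨-, N, hN⟩ := hg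
  refine Set.ncard_le_ncard h ((Set.finite_Iio N).subset fun i hi => ?_)
  by_contra hNi
  simp [hN i (not_lt.1 hNi)] at hi

lemma conj_succ_le {f : ℕ → ℕ} (hf : IsPartition f) (c : ℕ) : conj f (c + 1) ≤ conj f c :=
  conj_le_conj hf fun _ hi => (Nat.lt_succ_self c).trans hi

lemma conj_mono {f g : ℕ → ℕ} (hg : IsPartition g) (hle : ∀ i, f i ≤ g i) (c : ℕ) :
    conj f c ≤ conj g c :=
  conj_le_conj hg fun i hi => hi.trans_le (hle i)

/-- The point `(f'_c - c)_c` recording the column lengths of `f`, in the first `L` columns. -/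
noncomputable def columnPoint (L : ℕ) (f : ℕ → ℕ) (c : Fin L) : ℤ := conj f c - c.1

lemma columnPoint_mem_alcove {L d : ℕ} {f : ℕ → ℕ} (hL : 0 < L) (hf : IsPartition f)
    (hglue : conj f 0 ≤ conj f (L - 1) + d) :
    columnPoint L f ∈ alcove (Fin L) (L + d : ℕ) := by
  refine (mem_alcove_fin_iff hL).2 ⟨fun c _ => ?_, ?_⟩
  · have := conj_succ_le hf c.1
    simp only [columnPoint]; omega
  · simp only [columnPoint]; omega

variable {lam mu : ℕ → ℕ} {d : ℕ}

lemma isCylTab_iff_columns (hlam : IsPartition lam) (hmu : IsPartition mu)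
    (hle : ∀ i, mu i ≤ lam i) (hpos : 0 < lam 0) (hglue_lam : conj lam 0 ≤ conj lam (lam 0 - 1) + d)
    (hglue_mu : conj mu 0 ≤ conj mu (lam 0 - 1) + d) {P : Type*} [PartialOrder P]
    (T : ∀ c : Fin (lam 0), Fin (conj lam c - conj mu c) → P) :
    IsCylTab lam mu d T ↔ (∀ c, StrictMono (T c)) ∧
      (∀ (c : Fin (lam 0)) (hc : c.1 + 1 < lam 0), ∀ p q,
        conj mu c + p.1 = conj mu (c + 1) + q.1 → ¬T ⟨c + 1, hc⟩ q < T c p) ∧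
      ∀ p q, conj mu (lam 0 - 1) + d + p.1 = conj mu 0 + q.1 →
        ¬T ⟨0, hpos⟩ q < T ⟨lam 0 - 1, Nat.sub_lt hpos Nat.one_pos⟩ p := by
  simp only [IsCylTab, add_right_comm _ d]
  exact ⟨fun ⟨_, _, _, hmono, hrow, hwrap⟩ => ⟨fun c => hmono c, hrow, hwrap hpos⟩,
    fun ⟨hmono, hrow, hwrap⟩ => ⟨fun c _ => ⟨conj_succ_le hlam c, conj_succ_le hmu c⟩,
      fun c _ => conj_mono hlam hle c, fun _ => ⟨hglue_lam, hglue_mu⟩,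
      fun c => hmono c, hrow, fun _ => hwrap⟩⟩

theorem isCylTab_iff_walk_mem_alcove (hlam : IsPartition lam) (hmu : IsPartition mu)
    (hle : ∀ i, mu i ≤ lam i) (hpos : 0 < lam 0) (hglue_lam : conj lam 0 ≤ conj lam (lam 0 - 1) + d)
    (hglue_mu : conj mu 0 ≤ conj mu (lam 0 - 1) + d) {N : ℕ}
    (T : ∀ c : Fin (lam 0), Fin (conj lam c - conj mu c) → Fin N) :
    IsCylTab lam mu d T ↔ (∀ c, StrictMono (T c)) ∧
      ∀ t, walk (columnPoint (lam 0) mu) (columnsContaining T) t ∈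
        alcove (Fin (lam 0)) (lam 0 + d : ℕ) := by
  have hcol (c : ℕ) : conj mu c ≤ conj lam c := conj_mono hlam hle c
  rw [isCylTab_iff_columns hlam hmu hle hpos hglue_lam hglue_mu]
  refine and_congr_right fun hT => ?_
  simp only [mem_alcove_fin_iff hpos, forall_and]
  refine and_congr ?_ ?_
  · have hrow (c : Fin (lam 0)) (hc : c.1 + 1 < lam 0) :=
      forall_not_lt_iff_walk_le hT (columnPoint (lam 0) mu) (c := c) (c' := ⟨c + 1, hc⟩)
        (conj_succ_le hmu c) (by
          have := hcol c; have := hcol (c + 1); have := conj_succ_le hlam c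
          simp only; omega)
    refine (forall₂_congr hrow).trans ⟨fun H t c hc => ?_, fun H c hc t => ?_⟩
    · have := H c hc t
      simp only [columnPoint] at this
      omega
    · have := H t c hc
      simp only [columnPoint]
      omega
  · refine (forall_not_lt_iff_walk_le hT (columnPoint (lam 0) mu) (c := ⟨lam 0 - 1, _⟩)
      (c' := ⟨0, hpos⟩) hglue_mu ?_).trans (forall_congr' fun t => ?_)
    · have := hcol 0; have := hcol (lam 0 - 1)
      simp only; omega
    · simp only [columnPoint]
      omega

end Shape

end CylindricJacobiTrudi

open CylindricJacobiTrudi in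
theorem stmt_19_general {R : Type*} [CommRing R] {lam mu : ℕ → ℕ} {d : ℕ} (hlam : IsPartition lam)
    (hmu : IsPartition mu) (hle : ∀ i, mu i ≤ lam i) (hpos : 0 < lam 0)
    (hglue_lam : conj lam 0 ≤ conj lam (lam 0 - 1) + d)
    (hglue_mu : conj mu 0 ≤ conj mu (lam 0 - 1) + d) {N : ℕ} (x : Fin N → R) :
    ∑ T : {T : ∀ c : Fin (lam 0), Fin (conj lam c - conj mu c) → Fin N // IsCylTab lam mu d T},
        ∏ c, ∏ p, x (T.1 c p) =
      ∑ᶠ k : {k : Fin (lam 0) → ℤ // ∑ i, k i = 0},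
        Matrix.det (Matrix.of fun i j : Fin (lam 0) =>
          esymmInt (Finset.univ.val.map x) (k.1 i * ((lam 0 + d : ℕ) : ℤ)
            + (conj lam i : ℤ) - (conj mu j : ℤ) - (i : ℤ) + (j : ℤ))) := by
  have hend : (fun c : Fin (lam 0) => columnPoint (lam 0) mu c + (conj lam c - conj mu c : ℕ)) =
      columnPoint (lam 0) lam := by
    funext c
    have := conj_mono hlam hle c
    simp only [columnPoint]
    omega
  calc
    _ = walkSum (alcove (Fin (lam 0)) (lam 0 + d : ℕ)) x (columnPoint (lam 0) mu)
        (columnPoint (lam 0) lam) := by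
      rw [← hend, ← sum_fillings_eq_walkSum, Finset.sum_subtype (p := IsCylTab lam mu d)]
      intro T
      simp [isCylTab_iff_walk_mem_alcove hlam hmu hle hpos hglue_lam hglue_mu T]
    _ = affineDet (lam 0 + d : ℕ) (Finset.univ.val.map x) (columnPoint (lam 0) mu)
        (columnPoint (lam 0) lam) :=
      walkSum_alcove (by omega) (columnPoint_mem_alcove hpos hmu hglue_mu) x
        (columnPoint_mem_alcove hpos hlam hglue_lam)
    _ = _ := by
      refine finsum_congr fun k => congrArg Matrix.det ?_
      ext i j
      simp only [Matrix.of_apply, columnPoint, Pi.add_apply, Pi.smul_apply, smul_eq_mul]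
      ring_nf

/-- (Gessel–Krattenthaler/Postnikov) for a cylindric shape `λ/μ/d`,
the cylindric Schur function `s_{λ/μ/d}(x)`, i.e. the generating function of
cylindric semistandard Young tableaux of shape `λ/μ/d`, equals
`Σ_{k, Σk_i=0} det[e_{k_i(λ₁+d)+λ'_i-μ'_j-i+j}(x)]` (in any number `N` of
variables). -/
theorem stmt_19 (lam mu : ℕ → ℕ) (d : ℕ) (hshape : IsCylShape lam mu d) (N : ℕ) :
    (∑ T : {T : ∀ col : Fin (lam 0), Fin (conj lam col - conj mu col) → Fin N //
        IsCylTab lam mu d T},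
      uT lam mu T.1)
    = ∑ᶠ k : {k : Fin (lam 0) → ℤ // ∑ i, k i = 0},
        Matrix.det (Matrix.of fun i j : Fin (lam 0) =>
          ezN N (k.1 i * ((lam 0 + d : ℕ) : ℤ)
            + (conj lam i.1 : ℤ) - (conj mu j.1 : ℤ) - (i.1 : ℤ) + (j.1 : ℤ))) := by
  obtain ⟨hlam, hmu, hle, hpos, hglue_lam, hglue_mu, -⟩ := hshape
  simpa only [uT, ezN, CylindricJacobiTrudi.esymmInt, esymm_eq_multiset_esymm] using
    stmt_19_general hlam hmu hle hpos hglue_lam hglue_mu (X (R := ℤ) (σ := Fin N))
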